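/- For every natural number k there exists a connected simple graph G such that every valid doubling-coloring (D, c) of G satisfies |D| ≥ k; that is, D_lir is not bounded above by any constant over connected graphs. -/

import Mathlib

open Finset
open scoped Classical

/-- The weighted degree of vertex `v` in color `i`: each edge incident to `v` colored `i`
counts 2 if it is doubled (lies in `D`) and 1 otherwise. -/
noncomputable def wdeg {V : Type*} [Fintype V] (G : SimpleGraph V)
    (D : Finset (Sym2 V)) (c : Sym2 V → Fin 2) (i : Fin 2) (v : V) : ℕ :=
  ∑ w ∈ Finset.univ.filter (fun w => G.Adj v w ∧ c s(v, w) = i),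
    (if s(v, w) ∈ D then 2 else 1)

/-- `(D, c)` is a valid doubling-coloring of `G`. -/
def ValidDC {V : Type*} [Fintype V] (G : SimpleGraph V)
    (D : Finset (Sym2 V)) (c : Sym2 V → Fin 2) : Prop :=
  ↑D ⊆ G.edgeSet ∧
    ∀ u v, G.Adj u v →
      wdeg G D c (c s(u, v)) u ≠ wdeg G D c (c s(u, v)) v

/-- Adjacency inside one gadget: a triangle `0 1 2`, an edge `0 3`, and two pendant
paths `3 4 5` and `3 6 7`. -/
def gadA : Fin 8 → Fin 8 → Bool := fun a b =>
  (a, b) ∈ ([(0,1),(1,0),(1,2),(2,1),(0,2),(2,0),(0,3),(3,0),(3,4),(4,3),(4,5),(5,4),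
    (3,6),(6,3),(6,7),(7,6)] : List (Fin 8 × Fin 8))

/-- A hub (`none`) joined to vertex `0` of each of `k` gadgets. -/
def gadAdj (k : ℕ) : Option (Fin k × Fin 8) → Option (Fin k × Fin 8) → Prop
  | none, none => False
  | none, some p => p.2 = 0
  | some p, none => p.2 = 0
  | some p, some q => p.1 = q.1 ∧ gadA p.2 q.2 = true

lemma gadA_symm : ∀ a b, gadA a b = true → gadA b a = true := by decide
lemma gadA_irrefl : ∀ a, gadA a a = false := by decide

def gadG (k : ℕ) : SimpleGraph (Option (Fin k × Fin 8)) where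
  Adj := gadAdj k
  symm := ⟨by
    rintro (_ | p) (_ | q) h
    · exact h
    · exact h
    · exact h
    · exact ⟨h.1.symm, gadA_symm _ _ h.2⟩⟩
  loopless := ⟨by
    rintro (_ | p) h
    · exact h
    · have := h.2
      rw [gadA_irrefl] at this
      exact absurd this (by decide)⟩

lemma gadG_connected (k : ℕ) : (gadG k).Connected := by
  have key : ∀ v, (gadG k).Reachable none v := by
    rintro (_ | ⟨i, j⟩)
    · exact SimpleGraph.Reachable.refl _
    · have h0 : (gadG k).Reachable none (some (i, 0)) :=
        SimpleGraph.Adj.reachable (show gadAdj k none (some (i, 0)) from rfl)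
      have st : ∀ a b, gadA a b = true → (gadG k).Reachable none (some (i, a)) →
          (gadG k).Reachable none (some (i, b)) := fun a b h r =>
        r.trans (SimpleGraph.Adj.reachable (show gadAdj k (some (i, a)) (some (i, b)) from ⟨rfl, h⟩))
      have h3 := st 0 3 (by decide) h0
      have h4 := st 3 4 (by decide) h3
      have h6 := st 3 6 (by decide) h3
      fin_cases j
      · exact h0
      · exact st 0 1 (by decide) h0
      · exact st 0 2 (by decide) h0
      · exact h3
      · exact h4
      · exact st 4 5 (by decide) h4
      · exact h6
      · exact st 6 7 (by decide) h6
  have : Nonempty (Option (Fin k × Fin 8)) := ⟨none⟩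
  exact ⟨fun u v => (key u).symm.trans (key v)⟩

/-- Weighted degree in an undoubled gadget. -/
lemma wdeg_gad (k : ℕ) (D : Finset (Sym2 (Option (Fin k × Fin 8))))
    (c : Sym2 (Option (Fin k × Fin 8)) → Fin 2) (i : Fin k)
    (hD : ∀ e ∈ D, ∀ j, some (i, j) ∉ e) (t : Fin 2) (j : Fin 8) :
    wdeg (gadG k) D c t (some (i, j)) =
      (if j = 0 ∧ c s(some (i, j), none) = t then 1 else 0) +
      ∑ j', if gadA j j' = true ∧ c s(some (i, j), some (i, j')) = t then 1 else 0 := by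
  unfold wdeg
  have h1 : ∀ w, s(some (i, j), w) ∉ D := fun w hw => hD _ hw j (Sym2.mem_mk_left _ _)
  simp only [h1, if_false]
  rw [Finset.sum_filter, Fintype.sum_option, Fintype.sum_prod_type]
  congr 1
  · exact if_congr Iff.rfl rfl rfl
  rw [Finset.sum_eq_single i]
  · refine Finset.sum_congr rfl fun j' _ => ?_
    simp [gadG, gadAdj]
  · intro b _ hb
    refine Finset.sum_eq_zero fun j' _ => ?_
    simp [gadG, gadAdj, Ne.symm hb]
  · simp

/-- Indicator of color equality. -/
def ind (a t : Fin 2) : ℕ := if a = t then 1 else 0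

lemma no_local : ∀ h xu uw wx xy ya ab yd de : Fin 2,
    ind ab ya + ind ab ab ≠ ind ab ab →
    ind ya ya + ind ya ab ≠ ind ya xy + ind ya ya + ind ya yd →
    ind de yd + ind de de ≠ ind de de →
    ind yd yd + ind yd de ≠ ind yd xy + ind yd ya + ind yd yd →
    ind uw xu + ind uw uw ≠ ind uw wx + ind uw uw →
    ind h xu + ind h wx = ind h xu + ind h wx →
    ind xu h + ind xu xu + ind xu wx + ind xu xy ≠ ind xu xu + ind xu uw →
    ind wx h + ind wx xu + ind wx wx + ind wx xy ≠ ind wx wx + ind wx uw →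
    ind xy h + ind xy xu + ind xy wx + ind xy xy ≠ ind xy xy + ind xy ya + ind xy yd →
    False := by
  decide

lemma gad_touch (k : ℕ) (D : Finset (Sym2 (Option (Fin k × Fin 8))))
    (c : Sym2 (Option (Fin k × Fin 8)) → Fin 2) (hv : ValidDC (gadG k) D c) (i : Fin k) :
    ∃ e ∈ D, ∃ j, some (i, j) ∈ e := by
  by_contra hcon
  have hD : ∀ e ∈ D, ∀ j, some (i, j) ∉ e := fun e he j hj => hcon ⟨e, he, j, hj⟩
  have hw := wdeg_gad k D c i hD
  have H : ∀ a b, gadA a b = true →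
      wdeg (gadG k) D c (c s(some (i, a), some (i, b))) (some (i, a)) ≠
      wdeg (gadG k) D c (c s(some (i, a), some (i, b))) (some (i, b)) := fun a b h =>
    hv.2 _ _ (show gadAdj k (some (i, a)) (some (i, b)) from ⟨rfl, h⟩)
  have sw : ∀ a b : Fin 8, c s(some (i, a), some (i, b)) = c s(some (i, b), some (i, a)) :=
    fun a b => by rw [Sym2.eq_swap]
  have W0 : ∀ t, wdeg (gadG k) D c t (some (i, 0)) = ind (c s(some (i, 0), none)) t +
      ind (c s(some (i, 0), some (i, 1))) t + ind (c s(some (i, 0), some (i, 2))) t +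
      ind (c s(some (i, 0), some (i, 3))) t := by
    intro t; rw [hw, Fin.sum_univ_eight]; simp [gadA, ind]; ring
  have W1 : ∀ t, wdeg (gadG k) D c t (some (i, 1)) =
      ind (c s(some (i, 0), some (i, 1))) t + ind (c s(some (i, 1), some (i, 2))) t := by
    intro t; rw [hw, Fin.sum_univ_eight]; simp [gadA, ind, sw 1 0]
  have W2 : ∀ t, wdeg (gadG k) D c t (some (i, 2)) =
      ind (c s(some (i, 0), some (i, 2))) t + ind (c s(some (i, 1), some (i, 2))) t := by
    intro t; rw [hw, Fin.sum_univ_eight]; simp [gadA, ind, sw 2 0, sw 2 1]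
  have W3 : ∀ t, wdeg (gadG k) D c t (some (i, 3)) =
      ind (c s(some (i, 0), some (i, 3))) t + ind (c s(some (i, 3), some (i, 4))) t +
      ind (c s(some (i, 3), some (i, 6))) t := by
    intro t; rw [hw, Fin.sum_univ_eight]; simp [gadA, ind, sw 3 0]
  have W4 : ∀ t, wdeg (gadG k) D c t (some (i, 4)) =
      ind (c s(some (i, 3), some (i, 4))) t + ind (c s(some (i, 4), some (i, 5))) t := by
    intro t; rw [hw, Fin.sum_univ_eight]; simp [gadA, ind, sw 4 3]
  have W5 : ∀ t, wdeg (gadG k) D c t (some (i, 5)) =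
      ind (c s(some (i, 4), some (i, 5))) t := by
    intro t; rw [hw, Fin.sum_univ_eight]; simp [gadA, ind, sw 5 4]
  have W6 : ∀ t, wdeg (gadG k) D c t (some (i, 6)) =
      ind (c s(some (i, 3), some (i, 6))) t + ind (c s(some (i, 6), some (i, 7))) t := by
    intro t; rw [hw, Fin.sum_univ_eight]; simp [gadA, ind, sw 6 3]
  have W7 : ∀ t, wdeg (gadG k) D c t (some (i, 7)) =
      ind (c s(some (i, 6), some (i, 7))) t := by
    intro t; rw [hw, Fin.sum_univ_eight]; simp [gadA, ind, sw 7 6]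
  have E45 := H 4 5 (by decide)
  have E34 := H 3 4 (by decide)
  have E67 := H 6 7 (by decide)
  have E36 := H 3 6 (by decide)
  have E12 := H 1 2 (by decide)
  have E01 := H 0 1 (by decide)
  have E02 := H 0 2 (by decide)
  have E03 := H 0 3 (by decide)
  rw [W4, W5] at E45
  rw [W3, W4] at E34
  rw [W6, W7] at E67
  rw [W3, W6] at E36
  rw [W1, W2] at E12
  rw [W0, W1] at E01
  rw [W0, W2] at E02
  rw [W0, W3] at E03
  clear W0 W1 W2 W3 W4 W5 W6 W7 H hw hcon hD sw
  generalize c s(some (i, 0), none) = h at *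
  generalize c s(some (i, 0), some (i, 1)) = xu at *
  generalize c s(some (i, 1), some (i, 2)) = uw at *
  generalize c s(some (i, 0), some (i, 2)) = wx at *
  generalize c s(some (i, 0), some (i, 3)) = xy at *
  generalize c s(some (i, 3), some (i, 4)) = ya at *
  generalize c s(some (i, 4), some (i, 5)) = ab at *
  generalize c s(some (i, 3), some (i, 6)) = yd at *
  generalize c s(some (i, 6), some (i, 7)) = de at *
  clear hv
  have isym : ∀ a t, ind a t = ind t a := fun a t => by simp [ind, eq_comm]
  refine no_local h xu uw wx xy ya ab yd de ?_ ?_ ?_ ?_ ?_ rfl ?_ ?_ ?_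
  · simpa only [isym ab] using E45
  · intro hh; apply E34; rw [isym xy, isym yd, isym ab]; exact hh.symm
  · intro hh; apply E67; rw [isym yd]; exact hh
  · intro hh; apply E36; rw [isym xy, isym ya, isym de]; exact hh.symm
  · intro hh; apply E12; rw [isym xu, isym wx]; exact hh
  · intro hh; apply E01; rw [isym h, isym wx, isym xy, isym uw]; exact hh
  · intro hh; apply E02; rw [isym h, isym xu, isym xy, isym uw]; exact hh
  · intro hh; apply E03; rw [isym h, isym xu, isym wx, isym ya, isym yd]; exact hh

lemma gad_bound (k : ℕ) (D : Finset (Sym2 (Option (Fin k × Fin 8))))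
    (c : Sym2 (Option (Fin k × Fin 8)) → Fin 2) (hv : ValidDC (gadG k) D c) :
    k ≤ D.card := by
  choose f hf g hg using gad_touch k D c hv
  have hinj : Function.Injective f := by
    intro a b hab
    by_contra hne
    have h1 := hg a
    have h2 := hg b
    rw [← hab] at h2
    have hab' : f a = s(some (a, g a), some (b, g b)) :=
      (Sym2.mem_and_mem_iff (by simp [hne])).1 ⟨h1, h2⟩
    have hE := hv.1 (hf a)
    rw [hab'] at hE
    exact hne (show gadAdj k (some (a, g a)) (some (b, g b)) from hE).1
  calc k = (Finset.univ : Finset (Fin k)).card := by simp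
    _ ≤ D.card := Finset.card_le_card_of_injOn f (fun a _ => hf a) hinj.injOn

/-- Transport of validity along a relabelling of the vertices. -/
lemma valid_transfer {V W : Type*} [Fintype V] [Fintype W] (e : V ≃ W) (G : SimpleGraph V)
    (D : Finset (Sym2 W)) (c : Sym2 W → Fin 2)
    (hv : ValidDC (G.comap e.symm) D c) :
    ValidDC G (D.image (Sym2.map e.symm)) (fun x => c (Sym2.map e x)) := by
  have hmem : ∀ u v : V, s(u, v) ∈ D.image (Sym2.map e.symm) ↔ s(e u, e v) ∈ D := by
    intro u v
    rw [Finset.mem_image]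
    constructor
    · rintro ⟨x, hx, hxe⟩
      have : s(e u, e v) = x := by
        rw [← Sym2.map_mk, ← hxe, Sym2.map_map]
        simp
      rwa [this]
    · intro h
      exact ⟨_, h, by simp⟩
  have hw : ∀ t v, wdeg G (D.image (Sym2.map e.symm)) (fun x => c (Sym2.map e x)) t v =
      wdeg (G.comap e.symm) D c t (e v) := by
    intro t v
    unfold wdeg
    refine Finset.sum_equiv e ?_ ?_
    · intro w; simp only [Finset.mem_filter, Finset.mem_univ, true_and]; simp
    · intro w _; simp only [hmem]
  constructor
  · intro x hx
    induction x using Sym2.ind with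
    | _ u v =>
      have := hv.1 ((hmem u v).1 hx)
      simpa using this
  · intro u v huv
    rw [hw, hw]
    exact hv.2 (e u) (e v) (by simpa using huv)

lemma valid_transfer' {V W : Type*} [Fintype V] [Fintype W] (e : V ≃ W) (G : SimpleGraph V)
    (D : Finset (Sym2 W)) (c : Sym2 W → Fin 2)
    (hv : ValidDC (G.comap e.symm) D c) :
    ∃ (D' : Finset (Sym2 V)) (c' : Sym2 V → Fin 2), D'.card ≤ D.card ∧ ValidDC G D' c' :=
  ⟨_, _, Finset.card_image_le, valid_transfer e G D c hv⟩

/-- `D_lir` is not bounded by any constant over connected graphs: for every `k` there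
is a connected graph every valid doubling-coloring of which doubles at least `k` edges. -/
theorem Dlir_unbounded (k : ℕ) :
    ∃ (n : ℕ) (G : SimpleGraph (Fin n)), G.Connected ∧
      ∀ (D : Finset (Sym2 (Fin n))) (c : Sym2 (Fin n) → Fin 2),
        ValidDC G D c → k ≤ D.card := by
  let e := Fintype.equivFin (Option (Fin k × Fin 8))
  refine ⟨_, (gadG k).comap e.symm, ?_, fun D c hv => ?_⟩
  · exact (SimpleGraph.Iso.connected_iff (SimpleGraph.Iso.comap e.symm (gadG k))).2
      (gadG_connected k)
  · obtain ⟨D', c', hcard, hv'⟩ := valid_transfer' e (gadG k) D c hv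
    exact (gad_bound k D' c' hv').trans hcard
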